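/- Let L be a nilpotent symplectic alternating algebra of dimension 2n over a field 𝔽, and let I ⊆ J be ideals of L. (i) If dim J = dim I + 1 then J·L ⊆ I. (ii) If I is an ideal with dim I < 2n, then there exists an ideal J of L containing I with dim J = dim I + 1. (iii) If moreover I is isotropic with dim I < n, then J in (ii) can be chosen to be isotropic. -/

import Mathlib

/-!
Everything rests on `exists_mem_central_mod`: if `K` is an ideal not contained in `I`,
then some `x ∈ K \ I` satisfies `x·L ⊆ I`. Otherwise, starting from any element of `K \ I`, one
could multiply forever while staying in `K \ I`, descending the lower central series, against
nilpotency. For such an `x`, the subspace `I + 𝔽x` is an ideal of dimension `dim I + 1` whose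
product with `L` lies in `I`.

Taking `K = J` gives (i), as then `J = I + 𝔽x`; taking `K = L` gives (ii). For (iii) take
`K = I^⊥`, an ideal of dimension at least `2n - dim I > dim I`; since `x ∈ I^⊥`, the subspace
`I + 𝔽x` is isotropic.
-/

variable {𝔽 : Type*} [Field 𝔽] {L : Type*} [AddCommGroup L] [Module 𝔽 L]

structure SymplecticAlternatingAlgebra (𝔽 L : Type*) [Field 𝔽] [AddCommGroup L]
    [Module 𝔽 L] where
  form : L →ₗ[𝔽] L →ₗ[𝔽] 𝔽
  mul : L →ₗ[𝔽] L →ₗ[𝔽] L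
  form_alt : ∀ x, form x x = 0
  form_nondeg : ∀ x, (∀ y, form x y = 0) → x = 0
  mul_alt : ∀ x, mul x x = 0
  compat : ∀ u v w, form (mul u v) w = form (mul v w) u

namespace SymplecticAlternatingAlgebra

variable (S : SymplecticAlternatingAlgebra 𝔽 L)

/-- `U·V`, the span of all products `u·v`. -/
def prodSub (U V : Submodule 𝔽 L) : Submodule 𝔽 L := Submodule.map₂ S.mul U V

/-- An ideal: `I·L ⊆ I`. -/
def IsIdeal (I : Submodule 𝔽 L) : Prop := S.prodSub I ⊤ ≤ I

/-- Orthogonal complement with respect to the form. -/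
def perp (U : Submodule 𝔽 L) : Submodule 𝔽 L where
  carrier := {x | ∀ u ∈ U, S.form x u = 0}
  add_mem' := by
    intro a b ha hb u hu
    simp [map_add, ha u hu, hb u hu]
  zero_mem' := by
    intro u hu
    simp
  smul_mem' := by
    intro c a ha u hu
    simp [ha u hu]

/-- `lcs n = L^(n+1)`: the lower central series, `lcs 0 = L¹ = L`. -/
def lcs : ℕ → Submodule 𝔽 L
  | 0 => ⊤
  | n + 1 => S.prodSub (lcs n) ⊤

/-- `ucs n = Z_n(L)`: the upper central series. -/
def ucs : ℕ → Submodule 𝔽 L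
  | 0 => ⊥
  | n + 1 => ⨅ y : L, (ucs n).comap (S.mul.flip y)

/-- The center `Z(L)`. -/
def center : Submodule 𝔽 L := ⨅ y : L, LinearMap.ker (S.mul.flip y)

/-- Nilpotency: some term of the lower central series vanishes. -/
def IsNilpotent : Prop := ∃ n, S.lcs n = ⊥

/-- `s` generates `L` as an algebra: the smallest subspace containing `s`
and closed under the multiplication is `L` itself. -/
def Generates (s : Set L) : Prop :=
  ∀ M : Submodule 𝔽 L, s ⊆ (M : Set L) → S.prodSub M M ≤ M → M = ⊤

end SymplecticAlternatingAlgebra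

open SymplecticAlternatingAlgebra Module

namespace SymplecticAlternatingAlgebra

variable (S : SymplecticAlternatingAlgebra 𝔽 L)

lemma prodSub_top_le {U V : Submodule 𝔽 L} :
    S.prodSub U ⊤ ≤ V ↔ ∀ u ∈ U, ∀ y, S.mul u y ∈ V := by
  simp [prodSub, Submodule.map₂_le]

lemma form_swap (x y : L) : S.form x y = -S.form y x := by
  have h := S.form_alt (x + y)
  simp only [map_add, LinearMap.add_apply, S.form_alt, zero_add, add_zero] at h
  linear_combination h

lemma mul_swap (x y : L) : S.mul x y = -S.mul y x := by
  have h := S.mul_alt (x + y)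
  simp only [map_add, LinearMap.add_apply, S.mul_alt, zero_add, add_zero] at h
  exact eq_neg_of_add_eq_zero_right h

/-- When `I` is an ideal, this says that the nonzero ideal `(K + I) / I` of the nilpotent
algebra `L / I` meets its center nontrivially. The argument only needs `I` to be a subspace. -/
lemma exists_mem_central_mod (hnil : S.IsNilpotent) {I K : Submodule 𝔽 L}
    (hK : S.IsIdeal K) (hKI : ¬ K ≤ I) :
    ∃ x ∈ K, x ∉ I ∧ ∀ y, S.mul x y ∈ I := by
  by_contra! hcon
  have key : ∀ m, ∃ x ∈ K, x ∉ I ∧ x ∈ S.lcs m := by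
    intro m
    induction m with
    | zero =>
      obtain ⟨x, hxK, hxI⟩ := SetLike.not_le_iff_exists.1 hKI
      exact ⟨x, hxK, hxI, Submodule.mem_top⟩
    | succ m ih =>
      obtain ⟨x, hxK, hxI, hxm⟩ := ih
      obtain ⟨y, hy⟩ := hcon x hxK hxI
      exact ⟨S.mul x y, S.prodSub_top_le.1 hK x hxK y, hy,
        Submodule.apply_mem_map₂ _ hxm Submodule.mem_top⟩
  obtain ⟨m, hm⟩ := hnil
  obtain ⟨x, -, hxI, hx⟩ := key m
  rw [hm, Submodule.mem_bot] at hx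
  exact hxI (hx ▸ I.zero_mem)

lemma prodSub_sup_span_le {I : Submodule 𝔽 L} (hI : S.IsIdeal I) {x : L}
    (hx : ∀ y, S.mul x y ∈ I) : S.prodSub (I ⊔ 𝔽 ∙ x) ⊤ ≤ I := by
  rw [prodSub_top_le]
  intro u hu y
  obtain ⟨i, hi, z, hz, rfl⟩ := Submodule.mem_sup.1 hu
  obtain ⟨c, rfl⟩ := Submodule.mem_span_singleton.1 hz
  simp only [map_add, map_smul, LinearMap.add_apply, LinearMap.smul_apply]
  exact I.add_mem (S.prodSub_top_le.1 hI i hi y) (I.smul_mem c (hx y))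

lemma isIdeal_perp {I : Submodule 𝔽 L} (hI : S.IsIdeal I) : S.IsIdeal (S.perp I) := by
  refine S.prodSub_top_le.2 fun x hx y u hu => ?_
  rw [S.compat, S.mul_swap, map_neg, LinearMap.neg_apply, S.form_swap, neg_neg]
  exact hx _ (S.prodSub_top_le.1 hI u hu y)

/-- `I^⊥` is the kernel of the map `L → I*` induced by the form. -/
lemma finrank_le_finrank_perp_add [FiniteDimensional 𝔽 L] (I : Submodule 𝔽 L) :
    Module.finrank 𝔽 L ≤ Module.finrank 𝔽 (S.perp I) + Module.finrank 𝔽 I := by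
  let f : L →ₗ[𝔽] Module.Dual 𝔽 I := S.form.compl₂ I.subtype
  have hker : LinearMap.ker f = S.perp I := by
    ext x
    simp only [LinearMap.mem_ker, LinearMap.ext_iff, f]
    exact ⟨fun h u hu => h ⟨u, hu⟩, fun h u => h u u.2⟩
  have h := f.finrank_range_add_finrank_ker
  have h' := Submodule.finrank_le (LinearMap.range f)
  rw [Subspace.dual_finrank_eq] at h'
  rw [hker] at h
  omega

lemma isotropic_sup_span {I : Submodule 𝔽 L} (hI : I ≤ S.perp I) {x : L} (hx : x ∈ S.perp I) :
    I ⊔ 𝔽 ∙ x ≤ S.perp (I ⊔ 𝔽 ∙ x) := by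
  intro u hu v hv
  obtain ⟨i, hi, z, hz, rfl⟩ := Submodule.mem_sup.1 hu
  obtain ⟨c, rfl⟩ := Submodule.mem_span_singleton.1 hz
  obtain ⟨j, hj, w, hw, rfl⟩ := Submodule.mem_sup.1 hv
  obtain ⟨d, rfl⟩ := Submodule.mem_span_singleton.1 hw
  have h : S.form i x = 0 := by rw [S.form_swap, hx i hi, neg_zero]
  simp [hI hi j hj, hx j hj, h, S.form_alt]

end SymplecticAlternatingAlgebra

theorem ideal_extension [FiniteDimensional 𝔽 L]
    (S : SymplecticAlternatingAlgebra 𝔽 L) (hnil : S.IsNilpotent)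
    (n : ℕ) (hdim : Module.finrank 𝔽 L = 2 * n)
    (I : Submodule 𝔽 L) (hI : S.IsIdeal I) :
    (∀ J : Submodule 𝔽 L, S.IsIdeal J → I ≤ J →
      Module.finrank 𝔽 J = Module.finrank 𝔽 I + 1 → S.prodSub J ⊤ ≤ I) ∧
    (Module.finrank 𝔽 I < 2 * n →
      ∃ J : Submodule 𝔽 L, S.IsIdeal J ∧ I ≤ J ∧
        Module.finrank 𝔽 J = Module.finrank 𝔽 I + 1) ∧
    (I ≤ S.perp I → Module.finrank 𝔽 I < n →
      ∃ J : Submodule 𝔽 L, S.IsIdeal J ∧ I ≤ J ∧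
        Module.finrank 𝔽 J = Module.finrank 𝔽 I + 1 ∧ J ≤ S.perp J) := by
  refine ⟨fun J hJ hIJ hdJ => ?_, fun hlt => ?_, fun hiso hlt => ?_⟩
  · have hJI : ¬ J ≤ I := fun h => by
      have := Submodule.finrank_mono h
      omega
    obtain ⟨x, hxJ, hxI, hx⟩ := S.exists_mem_central_mod hnil hJ hJI
    have hle : I ⊔ 𝔽 ∙ x ≤ J := sup_le hIJ ((Submodule.span_singleton_le_iff_mem x J).2 hxJ)
    have heq : I ⊔ 𝔽 ∙ x = J :=
      Submodule.eq_of_le_of_finrank_eq hle ((Submodule.finrank_sup_span_singleton hxI).trans hdJ.symm)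
    rw [← heq]
    exact S.prodSub_sup_span_le hI hx
  · have htop : ¬ (⊤ : Submodule 𝔽 L) ≤ I := fun h => by
      have := Submodule.finrank_mono h
      rw [finrank_top] at this
      omega
    obtain ⟨x, -, hxI, hx⟩ := S.exists_mem_central_mod hnil (K := ⊤) le_top htop
    exact ⟨I ⊔ 𝔽 ∙ x, (S.prodSub_sup_span_le hI hx).trans le_sup_left, le_sup_left,
      Submodule.finrank_sup_span_singleton hxI⟩
  · have hperp : ¬ S.perp I ≤ I := fun h => by
      have := Submodule.finrank_mono h
      have := S.finrank_le_finrank_perp_add I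
      omega
    obtain ⟨x, hxp, hxI, hx⟩ := S.exists_mem_central_mod hnil (S.isIdeal_perp hI) hperp
    exact ⟨I ⊔ 𝔽 ∙ x, (S.prodSub_sup_span_le hI hx).trans le_sup_left, le_sup_left,
      Submodule.finrank_sup_span_singleton hxI, S.isotropic_sup_span hiso hxp⟩
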